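/- Let G be a finite simple graph, let T > 0 be the number of 4-cycles of G, and let η > 0 be a real number. Call an edge of G bad if it is contained in at least η·√T 4-cycles of G, and good otherwise. Then the number of 4-cycles of G that contain at most one bad edge is at least (1 − 82/η)·T. -/

import Mathlib

/-- A 4-cycle of a simple graph `G`: an unordered pair `{{u,v},{a,b}}` of
disjoint unordered pairs of distinct vertices such that each of `u`, `v` is
adjacent to each of `a`, `b`. -/
def IsFourCycle {V : Type*} (G : SimpleGraph V) (c : Sym2 (Sym2 V)) : Prop :=
  ∃ u v a b : V, c = s(s(u, v), s(a, b)) ∧ u ≠ v ∧ a ≠ b ∧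
    u ≠ a ∧ u ≠ b ∧ v ≠ a ∧ v ≠ b ∧
    G.Adj u a ∧ G.Adj u b ∧ G.Adj v a ∧ G.Adj v b

/-- `e` is one of the four edges of the 4-cycle `c = {{u,v},{a,b}}`, i.e. an
unordered pair with one endpoint in each part of `c`. -/
def IsCycleEdge {V : Type*} (c : Sym2 (Sym2 V)) (e : Sym2 V) : Prop :=
  ∃ p q : Sym2 V, c = s(p, q) ∧ ∃ x y, x ∈ p ∧ y ∈ q ∧ e = s(x, y)

/-- An edge is bad (for threshold `η·√T`) if it is contained in at least
`η·√T` 4-cycles of `G`. -/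
def IsBadEdge {V : Type*} (G : SimpleGraph V) (η : ℝ) (T : ℕ) (e : Sym2 V) : Prop :=
  η * Real.sqrt T ≤ ({c | IsFourCycle G c ∧ IsCycleEdge c e}.ncard : ℝ)

lemma finset_card_le_eight {α : Type*} [DecidableEq α] (a b c d e f g h : α) :
    ({a, b, c, d, e, f, g, h} : Finset α).card ≤ 8 := by
  refine (Finset.card_insert_le _ _).trans (Nat.succ_le_succ ?_)
  refine (Finset.card_insert_le _ _).trans (Nat.succ_le_succ ?_)
  exact Finset.card_le_six

open Classical in
/-- Ordered 4-cycles. -/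
noncomputable def hom4 {V : Type*} [Fintype V] (G : SimpleGraph V) : Finset ((V × V) × (V × V)) :=
  Finset.univ.filter fun t => t.1.1 ≠ t.1.2 ∧ t.2.1 ≠ t.2.2 ∧
    G.Adj t.1.1 t.2.1 ∧ G.Adj t.1.1 t.2.2 ∧ G.Adj t.1.2 t.2.1 ∧ G.Adj t.1.2 t.2.2

lemma isFourCycle_iff_hom4 {V : Type*} [Fintype V] (G : SimpleGraph V) (c : Sym2 (Sym2 V)) :
    IsFourCycle G c ↔ ∃ t ∈ hom4 G, s(s(t.1.1, t.1.2), s(t.2.1, t.2.2)) = c := by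
  constructor
  · rintro ⟨u, v, a, b, rfl, h1, h2, -, -, -, -, h3, h4, h5, h6⟩
    exact ⟨((u, v), (a, b)), by simp [hom4, *], rfl⟩
  · rintro ⟨⟨⟨u, v⟩, ⟨a, b⟩⟩, ht, rfl⟩
    simp only [hom4, Finset.mem_filter, Finset.mem_univ, true_and] at ht
    obtain ⟨h1, h2, h3, h4, h5, h6⟩ := ht
    exact ⟨u, v, a, b, rfl, h1, h2, h3.ne, h4.ne, h5.ne, h6.ne, h3, h4, h5, h6⟩

lemma isCycleEdge_mk {V : Type*} (u v a b : V) (e : Sym2 V) :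
    IsCycleEdge s(s(u, v), s(a, b)) e ↔ e = s(u, a) ∨ e = s(u, b) ∨ e = s(v, a) ∨ e = s(v, b) := by
  constructor
  · rintro ⟨p, q, h, x, y, hx, hy, rfl⟩
    rw [Sym2.eq_iff] at h
    rcases h with ⟨rfl, rfl⟩ | ⟨rfl, rfl⟩ <;>
    · rw [Sym2.mem_iff] at hx hy
      rcases hx with rfl | rfl <;> rcases hy with rfl | rfl <;> simp [Sym2.eq_swap]
  · rintro (rfl | rfl | rfl | rfl)
    · exact ⟨_, _, rfl, _, _, by simp, by simp, rfl⟩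
    · exact ⟨_, _, rfl, _, _, by simp, by simp, rfl⟩
    · exact ⟨_, _, rfl, _, _, by simp, by simp, rfl⟩
    · exact ⟨_, _, rfl, _, _, by simp, by simp, rfl⟩

open Classical in
lemma card_hom4_le {V : Type*} [Fintype V] (G : SimpleGraph V) (C : Finset (Sym2 (Sym2 V)))
    (hC : ∀ c, c ∈ C ↔ IsFourCycle G c) : (hom4 G).card ≤ 8 * C.card := by
  apply Finset.card_le_mul_card_image_of_maps_to
    (f := fun t : (V × V) × (V × V) => s(s(t.1.1, t.1.2), s(t.2.1, t.2.2)))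
  · intro t ht
    exact (hC _).2 ((isFourCycle_iff_hom4 G _).2 ⟨t, ht, rfl⟩)
  · intro c hc
    obtain ⟨u, v, a, b, rfl, -⟩ := (hC _).1 hc
    refine le_trans (Finset.card_le_card (t := ({((u,v),(a,b)), ((v,u),(a,b)), ((u,v),(b,a)),
      ((v,u),(b,a)), ((a,b),(u,v)), ((b,a),(u,v)), ((a,b),(v,u)), ((b,a),(v,u))} :
        Finset ((V × V) × (V × V)))) ?_) (finset_card_le_eight _ _ _ _ _ _ _ _)
    rintro ⟨⟨x, y⟩, ⟨z, w⟩⟩ ht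
    have h := (Finset.mem_filter.1 ht).2
    simp only [Sym2.eq_iff] at h
    rcases h with ⟨⟨rfl, rfl⟩ | ⟨rfl, rfl⟩, ⟨rfl, rfl⟩ | ⟨rfl, rfl⟩⟩ |
      ⟨⟨rfl, rfl⟩ | ⟨rfl, rfl⟩, ⟨rfl, rfl⟩ | ⟨rfl, rfl⟩⟩ <;> simp

open Classical in
/-- Bad darts count. -/
lemma card_darts_le {V : Type*} [Fintype V] (G : SimpleGraph V) (C : Finset (Sym2 (Sym2 V)))
    (hC : ∀ c, c ∈ C ↔ IsFourCycle G c) (r : ℝ) (D : Finset (V × V))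
    (hD : ∀ d ∈ D, r ≤ ({c | IsFourCycle G c ∧ IsCycleEdge c s(d.1, d.2)}.ncard : ℝ)) :
    D.card * r ≤ 8 * C.card := by
  have h1 : ∀ d ∈ D, r ≤ ((C.filter fun c => IsCycleEdge c s(d.1, d.2)).card : ℝ) := by
    intro d hd
    refine (hD d hd).trans_eq ?_
    rw [← Set.ncard_coe_finset]
    congr 2
    ext c; simp [hC]
  have h2 : ∑ d ∈ D, (C.filter fun c => IsCycleEdge c s(d.1, d.2)).card
      = ∑ c ∈ C, (D.filter fun d => IsCycleEdge c s(d.1, d.2)).card :=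
    Finset.sum_card_bipartiteAbove_eq_sum_card_bipartiteBelow _
  have h3 : ∑ c ∈ C, (D.filter fun d => IsCycleEdge c s(d.1, d.2)).card ≤ C.card * 8 := by
    apply Finset.sum_le_card_nsmul
    intro c hc
    obtain ⟨u, v, a, b, rfl, -⟩ := (hC _).1 hc
    refine le_trans (Finset.card_le_card (t := ({(u,a), (a,u), (u,b), (b,u), (v,a), (a,v),
      (v,b), (b,v)} : Finset (V × V))) ?_) (finset_card_le_eight _ _ _ _ _ _ _ _)
    rintro ⟨x, y⟩ ht
    have h := (Finset.mem_filter.1 ht).2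
    simp only [isCycleEdge_mk, Sym2.eq_iff] at h
    simp only [Finset.mem_insert, Finset.mem_singleton, Prod.mk.injEq]
    tauto
  calc (D.card : ℝ) * r = ∑ d ∈ D, r := by simp
    _ ≤ ∑ d ∈ D, ((C.filter fun c => IsCycleEdge c s(d.1, d.2)).card : ℝ) := Finset.sum_le_sum h1
    _ ≤ 8 * C.card := by
      rw [mul_comm]; rw [← h2] at h3; exact_mod_cast h3

open Classical in
/-- Ordered 4-cycles with two bad edges meeting at a vertex. -/
lemma card_adj_sq_le {V : Type*} [Fintype V] (G : SimpleGraph V) (D : Finset (V × V)) :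
    (((hom4 G).filter fun t => (t.1.1, t.2.1) ∈ D ∧ (t.1.2, t.2.1) ∈ D).card) ^ 2
      ≤ D.card ^ 2 * (hom4 G).card := by
  set A := (hom4 G).filter fun t => (t.1.1, t.2.1) ∈ D ∧ (t.1.2, t.2.1) ∈ D with hA
  let X : V × V → Finset V := fun p =>
    Finset.univ.filter fun a => p.1 ≠ p.2 ∧ G.Adj p.1 a ∧ G.Adj p.2 a
  let W : V × V → Finset V := fun p => (X p).filter fun a => (p.1, a) ∈ D ∧ (p.2, a) ∈ D
  have hH : (hom4 G).card = ∑ p : V × V, (X p).offDiag.card := by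
    rw [← Finset.card_sigma]
    refine Finset.card_bij' (fun t _ => ⟨t.1, t.2⟩) (fun t _ => (t.1, t.2)) ?_ ?_ ?_ ?_
    · rintro ⟨⟨u, v⟩, ⟨a, b⟩⟩ h
      simp [hom4, X] at h ⊢; tauto
    · rintro ⟨⟨u, v⟩, ⟨a, b⟩⟩ h
      simp [hom4, X] at h ⊢; tauto
    · intros; rfl
    · intros; rfl
  have hAc : A.card ≤ ∑ p : V × V, (W p).card * ((X p).card - 1) := by
    have : ∀ p : V × V, (W p).card * ((X p).card - 1) = ((W p).sigma fun a => (X p).erase a).card := by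
      intro p
      rw [Finset.card_sigma, Finset.sum_congr rfl, Finset.sum_const, smul_eq_mul]
      intro a ha
      exact Finset.card_erase_of_mem (Finset.mem_of_mem_filter a ha)
    simp_rw [this]
    rw [← Finset.card_sigma]
    refine Finset.card_le_card_of_injOn (fun t => ⟨t.1, ⟨t.2.1, t.2.2⟩⟩) ?_ ?_
    · rintro ⟨⟨u, v⟩, ⟨a, b⟩⟩ h
      simp [hA, hom4, X, W] at h ⊢
      have := h.1.2.1
      tauto
    · rintro ⟨⟨u, v⟩, ⟨a, b⟩⟩ h ⟨⟨u', v'⟩, ⟨a', b'⟩⟩ h' e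
      simp at e ⊢
      tauto
  have hW : ∑ p : V × V, (W p).card ^ 2 ≤ D.card ^ 2 := by
    have : ∀ p : V × V, (W p).card ^ 2 = (W p ×ˢ W p).card := by
      intro p; rw [Finset.card_product, sq]
    simp_rw [this]
    rw [← Finset.card_sigma, sq, ← Finset.card_product]
    refine Finset.card_le_card_of_injOn (fun t => ((t.1.1, t.2.1), (t.1.2, t.2.2))) ?_ ?_
    · rintro ⟨⟨u, v⟩, ⟨a, b⟩⟩ h
      simp [X, W] at h ⊢
      tauto
    · rintro ⟨⟨u, v⟩, ⟨a, b⟩⟩ h ⟨⟨u', v'⟩, ⟨a', b'⟩⟩ h' e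
      simp at e ⊢
      tauto
  have hX : ∑ p : V × V, ((X p).card - 1) ^ 2 ≤ (hom4 G).card := by
    rw [hH]
    apply Finset.sum_le_sum
    intro p _
    rw [Finset.offDiag_card]
    generalize (X p).card = n
    cases n with
    | zero => simp
    | succ n =>
      have : (n + 1) * (n + 1) - (n + 1) = n * n + n := by
        rw [Nat.sub_eq_iff_eq_add (by nlinarith)]; ring
      rw [this, Nat.add_sub_cancel]; nlinarith
  calc A.card ^ 2 ≤ (∑ p : V × V, (W p).card * ((X p).card - 1)) ^ 2 := Nat.pow_le_pow_left hAc 2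
    _ ≤ (∑ p : V × V, (W p).card ^ 2) * ∑ p : V × V, ((X p).card - 1) ^ 2 :=
      Finset.sum_mul_sq_le_sq_mul_sq _ _ _
    _ ≤ _ := Nat.mul_le_mul hW hX

open Classical in
/-- Ordered 4-cycles with two opposite bad edges. -/
lemma card_opp_le {V : Type*} [Fintype V] (G : SimpleGraph V) (D : Finset (V × V)) :
    ((hom4 G).filter fun t => (t.1.1, t.2.1) ∈ D ∧ (t.1.2, t.2.2) ∈ D).card ≤ D.card ^ 2 := by
  rw [sq, ← Finset.card_product]
  refine Finset.card_le_card_of_injOn (fun t => ((t.1.1, t.2.1), (t.1.2, t.2.2))) ?_ ?_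
  · rintro ⟨⟨u, v⟩, ⟨a, b⟩⟩ h
    simp at h ⊢
    tauto
  · rintro ⟨⟨u, v⟩, ⟨a, b⟩⟩ h ⟨⟨u', v'⟩, ⟨a', b'⟩⟩ h' e
    simp at e ⊢
    tauto

open Classical in
lemma card_multi_le {V : Type*} [Fintype V] (G : SimpleGraph V) (B : Sym2 V → Prop)
    (D : Finset (V × V)) (hD : ∀ x y, (x, y) ∈ D ↔ B s(x, y)) (M : Finset (Sym2 (Sym2 V)))
    (hM : ∀ c ∈ M, IsFourCycle G c ∧ ∃ e f, e ≠ f ∧ (IsCycleEdge c e ∧ B e) ∧ IsCycleEdge c f ∧ B f) :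
    M.card ≤ ((hom4 G).filter fun t => (t.1.1, t.2.1) ∈ D ∧ (t.1.2, t.2.1) ∈ D).card +
      ((hom4 G).filter fun t => (t.1.1, t.2.1) ∈ D ∧ (t.1.2, t.2.2) ∈ D).card := by
  refine le_trans ?_ (Finset.card_union_le _ _)
  refine le_trans (Finset.card_le_card ?_) (Finset.card_image_le
    (f := fun t : (V × V) × (V × V) => s(s(t.1.1, t.1.2), s(t.2.1, t.2.2))))
  intro c hc
  obtain ⟨h4, e, f, hne, ⟨he, hbe⟩, hf, hbf⟩ := hM c hc
  obtain ⟨⟨⟨u, v⟩, ⟨a, b⟩⟩, ht, rfl⟩ := (isFourCycle_iff_hom4 G c).1 h4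
  simp only [hom4, Finset.mem_filter, Finset.mem_univ, true_and] at ht
  obtain ⟨h1, h2, h3, h4, h5, h6⟩ := ht
  -- adjacent and opposite witnesses
  have key : ∀ x y z w : V, s(s(x, y), s(z, w)) = s(s(u, v), s(a, b)) → 
      (x ≠ y ∧ z ≠ w ∧ G.Adj x z ∧ G.Adj x w ∧ G.Adj y z ∧ G.Adj y w) →
      B s(x, z) → (B s(y, z) ∨ B s(y, w)) → 
      s(s(u, v), s(a, b)) ∈ Finset.image
        (fun t : (V × V) × (V × V) => s(s(t.1.1, t.1.2), s(t.2.1, t.2.2)))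
        (((hom4 G).filter fun t => (t.1.1, t.2.1) ∈ D ∧ (t.1.2, t.2.1) ∈ D) ∪
      ((hom4 G).filter fun t => (t.1.1, t.2.1) ∈ D ∧ (t.1.2, t.2.2) ∈ D)) := by
    intro x y z w hs hh hb hb'
    refine Finset.mem_image.2 ⟨((x, y), (z, w)), ?_, hs⟩
    simp only [Finset.mem_union, Finset.mem_filter, hom4, Finset.mem_univ, true_and, hD]
    tauto
  have hs1 : s(s(u, v), s(b, a)) = s(s(u, v), s(a, b)) := by rw [Sym2.eq_swap (a := b)]
  have hs2 : s(s(v, u), s(a, b)) = s(s(u, v), s(a, b)) := by rw [Sym2.eq_swap (a := v)]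
  have hs3 : s(s(a, b), s(u, v)) = s(s(u, v), s(a, b)) := Sym2.eq_swap
  have hs4 : s(s(a, b), s(v, u)) = s(s(u, v), s(a, b)) := by rw [Sym2.eq_swap (a := v), hs3]
  have k1 := key u v a b rfl ⟨h1, h2, h3, h4, h5, h6⟩
  have k2 := key u v b a hs1 ⟨h1, h2.symm, h4, h3, h6, h5⟩
  have k3 := key a b u v hs3 ⟨h2, h1, h3.symm, h5.symm, h4.symm, h6.symm⟩
  have k4 := key a b v u hs4 ⟨h2, h1.symm, h5.symm, h3.symm, h6.symm, h4.symm⟩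
  rw [Sym2.eq_swap (a := a) (b := u), Sym2.eq_swap (a := b) (b := u),
    Sym2.eq_swap (a := b) (b := v)] at k3
  rw [Sym2.eq_swap (a := a) (b := v), Sym2.eq_swap (a := b) (b := u),
    Sym2.eq_swap (a := b) (b := v)] at k4
  rw [isCycleEdge_mk] at he hf
  clear key
  rcases he with rfl | rfl | rfl | rfl <;> rcases hf with rfl | rfl | rfl | rfl <;>
    first
    | exact absurd rfl hne
    | exact k1 hbe (Or.inl hbf)
    | exact k1 hbe (Or.inr hbf)
    | exact k1 hbf (Or.inl hbe)
    | exact k1 hbf (Or.inr hbe)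
    | exact k2 hbe (Or.inl hbf)
    | exact k2 hbe (Or.inr hbf)
    | exact k2 hbf (Or.inl hbe)
    | exact k2 hbf (Or.inr hbe)
    | exact k3 hbe (Or.inl hbf)
    | exact k3 hbf (Or.inl hbe)
    | exact k4 hbe (Or.inl hbf)
    | exact k4 hbf (Or.inl hbe)

/-- Lemma 4 (McGregor–Vorotnikova): at least `(1 − 82/η)·T` of the `T`
4-cycles of `G` contain at most one bad edge. -/
theorem fourCycles_atMostOne_badEdge {V : Type*} [Fintype V]
    (G : SimpleGraph V) (η : ℝ) (hη : 0 < η)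
    (T : ℕ) (hT : T = {c | IsFourCycle G c}.ncard) (hT0 : 0 < T) :
    (1 - 82 / η) * T ≤
      (({c | IsFourCycle G c ∧
          {e | IsCycleEdge c e ∧ IsBadEdge G η T e}.ncard ≤ 1}.ncard : ℝ)) := by
  classical
  by_cases hη82 : η ≤ 82
  · have h1 : 1 ≤ 82 / η := by rw [le_div_iff₀ hη]; linarith
    have h2 : (1 - 82 / η) * (T : ℝ) ≤ 0 :=
      mul_nonpos_of_nonpos_of_nonneg (by linarith) (Nat.cast_nonneg _)
    exact h2.trans (Nat.cast_nonneg _)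
  push Not at hη82
  set C : Finset (Sym2 (Sym2 V)) := Finset.univ.filter fun c => IsFourCycle G c with hCdef
  have hC : ∀ c, c ∈ C ↔ IsFourCycle G c := by intro c; simp [hCdef]
  have hTC : T = C.card := by
    rw [hT, ← Set.ncard_coe_finset]; congr 1; ext c; simp [hC]
  let D : Finset (V × V) := Finset.univ.filter fun d => IsBadEdge G η T s(d.1, d.2)
  let P : Sym2 (Sym2 V) → Prop := fun c => {e | IsCycleEdge c e ∧ IsBadEdge G η T e}.ncard ≤ 1
  have hgood : {c | IsFourCycle G c ∧
      {e | IsCycleEdge c e ∧ IsBadEdge G η T e}.ncard ≤ 1}.ncard = (C.filter P).card := by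
    rw [← Set.ncard_coe_finset]; congr 1; ext c; simp [hC, P]
  rw [hgood]
  have hsplit := Finset.card_filter_add_card_filter_not (s := C) P
  have hM := card_multi_le G (IsBadEdge G η T) D (by simp [D]) (C.filter fun c => ¬ P c) (by
    intro c hc
    rw [Finset.mem_filter, hC] at hc
    refine ⟨hc.1, ?_⟩
    have h2 := hc.2
    simp only [P, not_le] at h2
    obtain ⟨e, he, f, hf, hne⟩ := (Set.one_lt_ncard (Set.toFinite _)).1 h2
    exact ⟨e, f, hne, he, hf⟩)
  have hA := card_adj_sq_le G D
  have hO := card_opp_le G D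
  have hH := card_hom4_le G C hC
  have hDc := card_darts_le G C hC (η * Real.sqrt T) D (by
    intro d hd
    exact (Finset.mem_filter.1 hd).2)
  rw [← hTC] at hH hDc hsplit
  generalize ((hom4 G).filter fun t => (t.1.1, t.2.1) ∈ D ∧ (t.1.2, t.2.1) ∈ D).card = A at *
  generalize ((hom4 G).filter fun t => (t.1.1, t.2.1) ∈ D ∧ (t.1.2, t.2.2) ∈ D).card = O at *
  generalize (C.filter fun c => ¬ P c).card = M at *
  generalize (C.filter P).card = N at *
  generalize D.card = d at *
  have hA' : A ^ 2 ≤ d ^ 2 * (8 * T) := hA.trans (Nat.mul_le_mul_left _ hH)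
  have hA2 : (A : ℝ) ^ 2 ≤ d ^ 2 * (8 * T) := by exact_mod_cast hA'
  have hO2 : (O : ℝ) ≤ d ^ 2 := by exact_mod_cast hO
  have hM2 : (M : ℝ) ≤ A + O := by exact_mod_cast hM
  have hN2 : (N : ℝ) + M = T := by exact_mod_cast hsplit
  have hTpos : (0 : ℝ) < T := by exact_mod_cast hT0
  have hs : Real.sqrt T ^ 2 = T := Real.sq_sqrt hTpos.le
  have hsp : 0 < Real.sqrt T := Real.sqrt_pos.2 hTpos
  set s := Real.sqrt T with hsdef
  have hd0 : (0 : ℝ) ≤ d := Nat.cast_nonneg _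
  rw [← hs] at hDc hA2 hN2 ⊢
  have hd : (d : ℝ) ≤ 8 * s / η := by
    rw [le_div_iff₀ hη]
    have : (d : ℝ) * η * s ≤ 8 * s * s := by nlinarith
    exact le_of_mul_le_mul_right this hsp
  have hA3 : (A : ℝ) ≤ 3 * (d * s) := by
    refine (sq_le_sq₀ (by positivity) (by positivity)).1 ?_
    nlinarith [sq_nonneg ((d : ℝ) * s)]
  have hd1 : (d : ℝ) ≤ s := hd.trans (by rw [div_le_iff₀ hη]; nlinarith)
  have hfin : (M : ℝ) ≤ 4 * (d * s) := by nlinarith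
  have hds : (d : ℝ) * s ≤ 8 * s / η * s := mul_le_mul_of_nonneg_right hd hsp.le
  have e1 : (8 * s / η * s) * 4 = 32 / η * s ^ 2 := by ring
  have e2 : 32 / η * s ^ 2 ≤ 82 / η * s ^ 2 := by gcongr; norm_num
  linarith [sub_mul 1 (82 / η) (s ^ 2)]
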